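/- Let ≼ be a comparative probability order on [n] with n ≥ 1. Then there exists a subset A ⊆ [n] such that A ≺ [n]∖A and there is no C ⊆ [n] with A ≺ C ≺ [n]∖A; moreover, any such central pair (A, [n]∖A) is a flippable pair of ≼. In particular, the set of flippable pairs of ≼ is nonempty. -/

import Mathlib

/-!
By de Finetti's axiom complementation reverses `≼`: both `A ≼ B` and `Bᶜ ≼ Aᶜ` reduce to the
comparison of `A \ B` with `B \ A`. Let `A` be the `≼`-largest set that precedes its complement.
If `C` lay strictly between `A` and `Aᶜ`, so would `Cᶜ`, and one of these two sets precedes its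
complement, against the choice of `A`. The two members of a central pair cover `[n]`, so
flippability only concerns `D = ∅`.
-/

open Finset

/-- The strict part of a (total antisymmetric) order on subsets. -/
def cpLT {n : ℕ} (le : Finset (Fin n) → Finset (Fin n) → Prop)
    (A B : Finset (Fin n)) : Prop :=
  le A B ∧ A ≠ B

/-- `le` is a comparative probability order on `[n]`: a linear (total,
antisymmetric, transitive) order on the powerset of `[n]` with `∅ ≺ A` for
nonempty `A`, satisfying de Finetti's axiom. -/
def IsCPO {n : ℕ} (le : Finset (Fin n) → Finset (Fin n) → Prop) : Prop :=
  (∀ A B, le A B ∨ le B A) ∧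
  (∀ A B, le A B → le B A → A = B) ∧
  (∀ A B C, le A B → le B C → le A C) ∧
  (∀ A : Finset (Fin n), A ≠ ∅ → cpLT le ∅ A) ∧
  (∀ A B C : Finset (Fin n), Disjoint (A ∪ B) C → (le A B ↔ le (A ∪ C) (B ∪ C)))

/-- `(A,B)` is a critical pair: disjoint, `A ≺ B`, and no `C` with `A ≺ C ≺ B`. -/
def Critical {n : ℕ} (le : Finset (Fin n) → Finset (Fin n) → Prop)
    (A B : Finset (Fin n)) : Prop :=
  Disjoint A B ∧ cpLT le A B ∧ ¬ ∃ C, cpLT le A C ∧ cpLT le C B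

/-- `(A,B)` is a flippable pair: critical, and for every `D` disjoint from
`A ∪ B` the pair `(A ∪ D, B ∪ D)` is adjacent. -/
def Flippable {n : ℕ} (le : Finset (Fin n) → Finset (Fin n) → Prop)
    (A B : Finset (Fin n)) : Prop :=
  Critical le A B ∧
  ∀ D : Finset (Fin n), Disjoint D (A ∪ B) →
    ¬ ∃ C, cpLT le (A ∪ D) C ∧ cpLT le C (B ∪ D)

/-- The set of flippable pairs of an order. -/
def FlippablePairs {n : ℕ} (le : Finset (Fin n) → Finset (Fin n) → Prop) :
    Set (Finset (Fin n) × Finset (Fin n)) :=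
  {p | Flippable le p.1 p.2}

/-- `le` is (additively) representable by a positive utility vector. -/
def Representable {n : ℕ} (le : Finset (Fin n) → Finset (Fin n) → Prop) : Prop :=
  ∃ u : Fin n → ℝ, (∀ i, 0 < u i) ∧
    ∀ A B : Finset (Fin n), le A B ↔ ∑ i ∈ A, u i ≤ ∑ i ∈ B, u i

/-- `(X, Y) = (A ∪ D, B ∪ D)` for some `D` disjoint from `A ∪ B`. -/
def FlipRel {n : ℕ} (A B X Y : Finset (Fin n)) : Prop :=
  ∃ D : Finset (Fin n), Disjoint D (A ∪ B) ∧ X = A ∪ D ∧ Y = B ∪ D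

/-- The relation obtained from `le` by flipping over the pair `(A,B)`:
all comparisons between `A ∪ D` and `B ∪ D` (for `D` disjoint from `A ∪ B`)
are reversed, all other comparisons are kept. -/
def flipOrder {n : ℕ} (le : Finset (Fin n) → Finset (Fin n) → Prop)
    (A B : Finset (Fin n)) : Finset (Fin n) → Finset (Fin n) → Prop :=
  fun X Y => (le X Y ∧ ¬ FlipRel A B X Y) ∨ FlipRel A B Y X

/-- Utility (sum of weights) of a subset. -/
def usum {k : ℕ} (m : Fin k → ℕ) (A : Finset (Fin k)) : ℕ := ∑ i ∈ A, m i

/-- The order on subsets induced by a utility vector. -/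
def uord {k : ℕ} (m : Fin k → ℕ) : Finset (Fin k) → Finset (Fin k) → Prop :=
  fun A B => usum m A ≤ usum m B

theorem exists_rel_adjacent_of_involutive {α : Type*} [Finite α] [Nonempty α] {r : α → α → Prop}
    [IsStrictOrder α r] {f : α → α} (hf : Function.Involutive f)
    (hcomp : ∀ a, r a (f a) ∨ r (f a) a) (hanti : ∀ {a b}, r a b → r (f b) (f a)) :
    ∃ a, r a (f a) ∧ ¬ ∃ b, r a b ∧ r b (f a) := by
  have rel_f_of_rel_f {a : α} (h : r (f a) a) : r (f a) (f (f a)) := (hf a).symm ▸ h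
  have hne : {a | r a (f a)}.Nonempty := by
    obtain ⟨a⟩ := ‹Nonempty α›
    exact (hcomp a).elim (fun h => ⟨a, h⟩) (fun h => ⟨f a, rel_f_of_rel_f h⟩)
  have hwf : WellFounded (Function.swap r) := Finite.wellFounded_of_trans_of_irrefl _
  obtain ⟨a, ha, hmax⟩ := hwf.has_min _ hne
  refine ⟨a, ha, ?_⟩
  rintro ⟨b, hab, hba⟩
  have hafb : r a (f b) := hf a ▸ hanti hba
  exact (hcomp b).elim (fun h => hmax b h hab) (fun h => hmax (f b) (rel_f_of_rel_f h) hafb)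

section DeFinetti

variable {α : Type*} [BooleanAlgebra α] {r : α → α → Prop}

/-- De Finetti's axiom for a relation on a Boolean algebra: comparisons are unaffected by joining
both sides with an element disjoint from them. For `α = Finset (Fin n)` this is the last clause of
`IsCPO`. -/
def DeFinetti (r : α → α → Prop) : Prop :=
  ∀ a b c, Disjoint (a ⊔ b) c → (r a b ↔ r (a ⊔ c) (b ⊔ c))

theorem DeFinetti.rel_sdiff_iff (h : DeFinetti r) (a b : α) : r (a \ b) (b \ a) ↔ r a b := by
  have hdisj : Disjoint (a \ b ⊔ b \ a) (a ⊓ b) := disjoint_symmDiff_inf a b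
  have ha : a \ b ⊔ a ⊓ b = a := sup_comm (a ⊓ b) _ ▸ sup_inf_sdiff a b
  have hb : b \ a ⊔ a ⊓ b = b := by rw [inf_comm, sup_comm, sup_inf_sdiff]
  rw [h _ _ _ hdisj, ha, hb]

theorem DeFinetti.rel_compl_iff (h : DeFinetti r) (a b : α) : r bᶜ aᶜ ↔ r a b := by
  rw [← h.rel_sdiff_iff, compl_sdiff_compl, compl_sdiff_compl, h.rel_sdiff_iff]

end DeFinetti

section Subsets

variable {n : ℕ} {le : Finset (Fin n) → Finset (Fin n) → Prop} {A B : Finset (Fin n)}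

theorem isStrictOrder_cpLT [IsTrans _ le] [Std.Antisymm le] : IsStrictOrder _ (cpLT le) where
  irrefl _ h := h.2 rfl
  trans A B C hAB hBC := by
    refine ⟨trans_of le hAB.1 hBC.1, ?_⟩
    rintro rfl
    exact hAB.2 (antisymm_of le hAB.1 hBC.1)

theorem cpLT_or_cpLT_of_ne [Std.Total le] (hAB : A ≠ B) : cpLT le A B ∨ cpLT le B A :=
  (total_of le A B).imp (⟨·, hAB⟩) (⟨·, hAB.symm⟩)

theorem DeFinetti.cpLT_compl (h : DeFinetti le) (hAB : cpLT le A B) : cpLT le Bᶜ Aᶜ :=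
  ⟨(h.rel_compl_iff A B).2 hAB.1, compl_injective.ne hAB.2.symm⟩

theorem Critical.flippable_of_union_eq_univ (h : Critical le A B) (hAB : A ∪ B = univ) :
    Flippable le A B := by
  refine ⟨h, fun D hD => ?_⟩
  obtain rfl : D = ∅ := by rwa [hAB, ← top_eq_univ, disjoint_top] at hD
  simpa only [union_empty] using h.2.2

theorem IsCPO.isLinearOrder (h : IsCPO le) : IsLinearOrder _ le where
  refl A := or_self_iff.1 (h.1 A A)
  trans := h.2.2.1
  antisymm := h.2.1
  total := h.1

theorem IsCPO.deFinetti (h : IsCPO le) : DeFinetti le :=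
  h.2.2.2.2

end Subsets

theorem stmt19_general {n : ℕ} (hn : 1 ≤ n) (le : Finset (Fin n) → Finset (Fin n) → Prop)
    [IsLinearOrder _ le] (h : DeFinetti le) :
    (∃ A : Finset (Fin n), cpLT le A (univ \ A) ∧
      ¬ ∃ C, cpLT le A C ∧ cpLT le C (univ \ A)) ∧
    (∀ A : Finset (Fin n), cpLT le A (univ \ A) →
      (¬ ∃ C, cpLT le A C ∧ cpLT le C (univ \ A)) →
      Flippable le A (univ \ A)) := by
  have : NeZero n := ⟨Nat.one_le_iff_ne_zero.1 hn⟩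
  have : IsStrictOrder _ (cpLT le) := isStrictOrder_cpLT
  simp only [← compl_eq_univ_sdiff]
  constructor
  · exact exists_rel_adjacent_of_involutive compl_involutive
      (fun _ => cpLT_or_cpLT_of_ne ne_compl_self) h.cpLT_compl
  · intro A hA hcentral
    have hcritical : Critical le A Aᶜ := ⟨disjoint_compl_right, hA, hcentral⟩
    exact hcritical.flippable_of_union_eq_univ (union_compl A)

/-- Every comparative probability order on `[n]` (with `n ≥ 1`) has a central
pair `(A, [n] ∖ A)` (i.e. `A ≺ [n]∖A` with nothing strictly between), and any
such central pair is flippable; in particular flippable pairs exist. -/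
theorem stmt19 {n : ℕ} (hn : 1 ≤ n)
    (le : Finset (Fin n) → Finset (Fin n) → Prop) (h : IsCPO le) :
    (∃ A : Finset (Fin n), cpLT le A (Finset.univ \ A) ∧
      ¬ ∃ C, cpLT le A C ∧ cpLT le C (Finset.univ \ A)) ∧
    (∀ A : Finset (Fin n), cpLT le A (Finset.univ \ A) →
      (¬ ∃ C, cpLT le A C ∧ cpLT le C (Finset.univ \ A)) →
      Flippable le A (Finset.univ \ A)) := by
  have := h.isLinearOrder
  exact stmt19_general hn le h.deFinetti
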